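/- Fix d : ℕ with d ≥ 2. For every n : ℕ, there is no family f : Fin n → (POVM → ℝ) of real-valued functions on the set of finite-outcome POVMs on ℂ^d such that for all POVMs M, N: M ≼post N ↔ ∀ i, f i M ≤ f i N. That is, no finite family of order monotones characterizes the quantum post-processing preorder of finite-outcome measurements on a d-dimensional quantum system. -/

import Mathlib

/-!
The post-processing order contains standard examples of every size: POVMs `A i`, `B i`, for
`i : Fin (n + 1)`, with `A j ≼ B i` iff `j ≠ i`. These force at least `n + 1` monotones: a monotone
`f` with `f (A i) > f (B i)` and `f (A j) > f (B j)`, where `i ≠ j`, would give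
`f (A i) > f (B i) ≥ f (A j) > f (B j) ≥ f (A i)`. So `n` monotones violate the pigeonhole
principle.

The standard examples already occur among diagonal POVMs, whose effects `diag(x, y, …, y)` are
points `(x, y)` of the unit square. A binary POVM with first effect `e` is a post-processing of `N`
iff `e` lies in the zonogon of all sums `∑ k, q k • N k` with `0 ≤ q k ≤ 1`. With `N = n + 2`, the
points `(k / N, (k / N) ^ 2)` lie on a parabola. The POVM `B i` has as zonogon the polygon in which
the edges on the two sides of the interior vertex number `i + 1` are replaced by one straight
segment, so that this vertex falls outside (`no_weights`) while all the others remain inside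
(`weights_of_ne`). The vertices `1, …, n + 1` are the first effects of the `A j`.
-/


open scoped ComplexOrder

/-- A finite-outcome POVM on `ℂ^d`. -/
structure POVM (d : ℕ) where
  m : ℕ
  M : Fin m → Matrix (Fin d) (Fin d) ℂ
  posSemidef : ∀ k, (M k).PosSemidef
  total : ∑ k, M k = 1

/-- The quantum post-processing relation on finite-outcome POVMs on `ℂ^d`. -/
def POVM.Post {d : ℕ} (E F : POVM d) : Prop :=
  ∃ p : Fin E.m → Fin F.m → ℝ,
    (∀ j k, 0 ≤ p j k) ∧ (∀ k, ∑ j, p j k = 1) ∧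
    ∀ j, E.M j = ∑ k, (p j k : ℂ) • F.M k

/-- The effect `diag(x, y, …, y)` on `ℂ^d`. -/
noncomputable def diagEffect (d : ℕ) (x y : ℝ) : Matrix (Fin d) (Fin d) ℂ :=
  Matrix.diagonal fun t => if t.val = 0 then (x : ℂ) else (y : ℂ)

/-- The diagonal POVM with effects `diag(x k, y k, …, y k)`. -/
noncomputable def diagPOVM (d : ℕ) {m : ℕ} (x y : Fin m → ℝ) (hx : ∀ k, 0 ≤ x k)
    (hy : ∀ k, 0 ≤ y k) (sx : ∑ k, x k = 1) (sy : ∑ k, y k = 1) : POVM d where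
  m := m
  M k := diagEffect d (x k) (y k)
  posSemidef k := by
    refine Matrix.PosSemidef.diagonal fun t => ?_
    dsimp only [Pi.zero_apply]
    split_ifs
    · exact_mod_cast hx k
    · exact_mod_cast hy k
  total := by
    ext a b
    rw [Matrix.sum_apply]
    by_cases hab : a = b
    · subst hab
      by_cases ha : a.val = 0
      · simp only [diagEffect, Matrix.diagonal_apply_eq, ha, if_true, Matrix.one_apply_eq]
        exact_mod_cast sx
      · simp only [diagEffect, Matrix.diagonal_apply_eq, ha, if_false, Matrix.one_apply_eq]
        exact_mod_cast sy
    · simp [diagEffect, hab]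

lemma diagEffect_eq_sum_iff {d : ℕ} (hd : 2 ≤ d) {m : ℕ} (a b : ℝ) (q x y : Fin m → ℝ) :
    diagEffect d a b = ∑ k, (q k : ℂ) • diagEffect d (x k) (y k) ↔
      a = ∑ k, q k * x k ∧ b = ∑ k, q k * y k := by
  constructor
  · intro h
    have h0 := congrFun (congrFun h ⟨0, by omega⟩) ⟨0, by omega⟩
    have h1 := congrFun (congrFun h ⟨1, by omega⟩) ⟨1, by omega⟩
    rw [Matrix.sum_apply] at h0 h1
    simp only [diagEffect, Matrix.diagonal_apply_eq, Matrix.smul_apply, smul_eq_mul, if_true,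
      one_ne_zero, if_false] at h0 h1
    exact ⟨by exact_mod_cast h0, by exact_mod_cast h1⟩
  · rintro ⟨rfl, rfl⟩
    ext s t
    rw [Matrix.sum_apply]
    by_cases hst : s = t
    · subst hst
      by_cases hs : s.val = 0 <;> simp [diagEffect, hs]
    · simp [diagEffect, hst]

/-- The binary POVM with first effect `diag(a, b, …, b)`. -/
noncomputable def binPOVM (d : ℕ) (a b : ℝ) (ha : 0 ≤ a) (ha' : a ≤ 1) (hb : 0 ≤ b)
    (hb' : b ≤ 1) : POVM d :=
  diagPOVM d ![a, 1 - a] ![b, 1 - b]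
    (by intro k; fin_cases k <;> simp [ha, ha'])
    (by intro k; fin_cases k <;> simp [hb, hb']) (by simp) (by simp)

/-- A binary POVM is a post-processing of a diagonal POVM iff its first effect lies in the
zonogon spanned by the effects of the latter. -/
lemma binPOVM_post_iff {d : ℕ} (hd : 2 ≤ d) {m : ℕ} {a b : ℝ} (ha : 0 ≤ a) (ha' : a ≤ 1)
    (hb : 0 ≤ b) (hb' : b ≤ 1) {x y : Fin m → ℝ} (hx : ∀ k, 0 ≤ x k)
    (hy : ∀ k, 0 ≤ y k) (sx : ∑ k, x k = 1) (sy : ∑ k, y k = 1) :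
    (binPOVM d a b ha ha' hb hb').Post (diagPOVM d x y hx hy sx sy) ↔
      ∃ q : Fin m → ℝ, (∀ k, 0 ≤ q k ∧ q k ≤ 1) ∧
        a = ∑ k, q k * x k ∧ b = ∑ k, q k * y k := by
  constructor
  · rintro ⟨p, hp, hs, h⟩
    change Fin 2 → Fin m → ℝ at p
    change ∀ (j : Fin 2) (k : Fin m), 0 ≤ p j k at hp
    change ∀ k : Fin m, ∑ j : Fin 2, p j k = 1 at hs
    change ∀ j : Fin 2, diagEffect d (![a, 1 - a] j) (![b, 1 - b] j)
      = ∑ k : Fin m, (p j k : ℂ) • diagEffect d (x k) (y k) at h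
    refine ⟨p 0, fun k => ⟨hp 0 k, ?_⟩, (diagEffect_eq_sum_iff hd a b (p 0) x y).1 (h 0)⟩
    have h1 := hs k
    rw [Fin.sum_univ_two] at h1
    linarith [hp 1 k]
  · rintro ⟨q, hq, h1, h2⟩
    let p : Fin 2 → Fin m → ℝ := ![q, fun k => 1 - q k]
    have H : (∀ (j : Fin 2) (k : Fin m), 0 ≤ p j k) ∧ (∀ k : Fin m, ∑ j : Fin 2, p j k = 1) ∧
        ∀ j : Fin 2, diagEffect d (![a, 1 - a] j) (![b, 1 - b] j)
          = ∑ k : Fin m, (p j k : ℂ) • diagEffect d (x k) (y k) := by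
      refine ⟨fun j k => ?_, fun k => ?_, fun j => ?_⟩
      · fin_cases j
        · exact (hq k).1
        · exact sub_nonneg.2 (hq k).2
      · simp [p, Fin.sum_univ_two]
      · rw [diagEffect_eq_sum_iff hd]
        fin_cases j
        · exact ⟨h1, h2⟩
        · simp [p, sub_mul, Finset.sum_sub_distrib, ← h1, ← h2, sx, sy]
    exact ⟨p, H⟩

/-- The (rescaled) increments along the parabola: `2 k + 1 = (k + 1) ^ 2 - k ^ 2`, except that the
two increments numbered `i` and `i + 1` are replaced by their average `2 i + 2`. -/
noncomputable def incr (i k : ℕ) : ℝ :=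
  2 * k + 1 + (if k = i then 1 else 0) - (if k = i + 1 then 1 else 0)

lemma incr_nonneg (i k : ℕ) : 0 ≤ incr i k := by
  unfold incr
  have : (0 : ℝ) ≤ k := k.cast_nonneg
  split_ifs <;> linarith

lemma sum_incr (i m : ℕ) :
    ∑ k ∈ Finset.range m, incr i k = (m : ℝ) ^ 2 + if m = i + 1 then 1 else 0 := by
  induction m with
  | zero => simp
  | succ m ih =>
    rw [Finset.sum_range_succ, ih, incr]
    simp only [Nat.add_right_cancel_iff]
    push_cast
    ring

lemma sum_range_ite_lt (N a : ℕ) (h : a ≤ N) (f : ℕ → ℝ) :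
    ∑ k ∈ Finset.range N, (if k < a then f k else 0) = ∑ k ∈ Finset.range a, f k := by
  rw [← Finset.sum_filter]
  congr 1
  ext k
  simp only [Finset.mem_filter, Finset.mem_range]
  omega

/-- Vertices other than number `i + 1` are partial sums of the increments. -/
lemma weights_of_ne {N i j : ℕ} (hN : j + 1 ≤ N) (hij : j ≠ i) :
    ∃ q : Fin N → ℝ, (∀ k, 0 ≤ q k ∧ q k ≤ 1) ∧
      ((j : ℝ) + 1) / N = ∑ k, q k * (1 / N) ∧
      (((j : ℝ) + 1) / N) ^ 2 = ∑ k, q k * (incr i k / N ^ 2) := by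
  refine ⟨fun k => if k.val < j + 1 then 1 else 0, fun k => ?_, ?_, ?_⟩
  · dsimp only
    split_ifs <;> simp
  · rw [← Finset.sum_mul, Fin.sum_univ_eq_sum_range (fun k => if k < j + 1 then (1 : ℝ) else 0) N,
      sum_range_ite_lt N _ hN (fun _ => 1)]
    simp [div_eq_mul_inv]
  · simp only [ite_mul, one_mul, zero_mul]
    rw [Fin.sum_univ_eq_sum_range
        (fun k => if k < j + 1 then incr i k / (N : ℝ) ^ 2 else 0) N,
      sum_range_ite_lt N _ hN (fun k => incr i k / (N : ℝ) ^ 2), ← Finset.sum_div, sum_incr,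
      if_neg (by omega)]
    push_cast
    ring

/-- Vertex number `i + 1` is separated from the zonogon by the tangent to the parabola at this
vertex, whose direction gives the functional `(x, y) ↦ y - 2 (i + 1) x` in rescaled coordinates. -/
lemma no_weights {N i : ℕ} (hN : i + 1 ≤ N) :
    ¬ ∃ q : Fin N → ℝ, (∀ k, 0 ≤ q k ∧ q k ≤ 1) ∧
      ((i : ℝ) + 1) / N = ∑ k, q k * (1 / N) ∧
      (((i : ℝ) + 1) / N) ^ 2 = ∑ k, q k * (incr i k / N ^ 2) := by
  rintro ⟨q, hq, h1, h2⟩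
  have hN0 : (N : ℝ) ≠ 0 := by
    have : N ≠ 0 := by omega
    exact_mod_cast this
  have e1 : ∑ k, q k = (i : ℝ) + 1 := by
    rw [← Finset.sum_mul] at h1
    field_simp at h1
    linarith
  have e2 : ∑ k, q k * incr i k = ((i : ℝ) + 1) ^ 2 := by
    simp only [← mul_div_assoc] at h2
    rw [← Finset.sum_div, div_pow] at h2
    field_simp at h2
    linarith
  -- The functional is negative exactly on the increments before number `i`, so the sum of those
  -- negative values bounds it from below on the zonogon.
  have key : ∀ k : Fin N,
      (if k.val < i then 2 * (k.val : ℝ) + 1 - 2 * (i + 1) else 0)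
        ≤ q k * (incr i k - 2 * (i + 1)) := by
    intro k
    obtain ⟨h0, h1⟩ := hq k
    split_ifs with hk
    · have e : incr i k = 2 * (k.val : ℝ) + 1 := by
        simp [incr, show k.val ≠ i by omega, show k.val ≠ i + 1 by omega]
      have hk' : (k.val : ℝ) ≤ i := by exact_mod_cast hk.le
      rw [e]
      nlinarith
    · refine mul_nonneg h0 ?_
      unfold incr
      have hk' : (i : ℝ) ≤ k.val := by exact_mod_cast not_lt.1 hk
      by_cases ha : k.val = i
      · simp [ha]
        linarith
      · have hk'' : (i : ℝ) + 1 ≤ k.val := by exact_mod_cast (show i + 1 ≤ k.val by omega)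
        rw [if_neg ha]
        split_ifs with hb
        · rw [hb]; push_cast; linarith
        · linarith
  have hsum := Finset.sum_le_sum fun k (_ : k ∈ Finset.univ) => key k
  have hodd : ∀ m : ℕ, ∑ k ∈ Finset.range m, (2 * (k : ℝ) + 1 - 2 * (i + 1))
      = (m : ℝ) ^ 2 - 2 * (i + 1) * m := by
    intro m
    induction m with
    | zero => simp
    | succ m ih => rw [Finset.sum_range_succ, ih]; push_cast; ring
  rw [Fin.sum_univ_eq_sum_range
      (fun k => if k < i then 2 * (k : ℝ) + 1 - 2 * (i + 1) else 0) N,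
    sum_range_ite_lt N i (by omega) (fun k => 2 * (k : ℝ) + 1 - 2 * (i + 1)), hodd] at hsum
  simp only [mul_sub, Finset.sum_sub_distrib] at hsum
  rw [e2, ← Finset.sum_mul, e1] at hsum
  nlinarith

lemma exists_standard_example (d : ℕ) (hd : 2 ≤ d) (n : ℕ) :
    ∃ A B : Fin (n + 1) → POVM d, ∀ i j, (A j).Post (B i) ↔ j ≠ i := by
  have hN : (0 : ℝ) < ((n + 2 : ℕ) : ℝ) := by positivity
  have h0 (j : Fin (n + 1)) : 0 ≤ ((j.val : ℝ) + 1) / (n + 2 : ℕ) := by positivity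
  have h1 (j : Fin (n + 1)) : ((j.val : ℝ) + 1) / (n + 2 : ℕ) ≤ 1 := by
    rw [div_le_one hN]
    exact_mod_cast (show j.val + 1 ≤ n + 2 by omega)
  refine ⟨fun j => binPOVM d (((j.val : ℝ) + 1) / (n + 2 : ℕ))
      ((((j.val : ℝ) + 1) / (n + 2 : ℕ)) ^ 2)
      (h0 j) (h1 j) (sq_nonneg _) (pow_le_one₀ (h0 j) (h1 j)),
    fun i => diagPOVM d (m := n + 2) (fun _ => 1 / (n + 2 : ℕ))
      (fun k => incr i k / (n + 2 : ℕ) ^ 2) (fun _ => by positivity)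
      (fun k => div_nonneg (incr_nonneg _ _) (by positivity)) ?_ ?_, fun i j => ?_⟩
  · rw [Finset.sum_const, Finset.card_univ, Fintype.card_fin, nsmul_eq_mul]
    field_simp
  · rw [← Finset.sum_div, Fin.sum_univ_eq_sum_range (fun k => incr i k) (n + 2), sum_incr,
      if_neg (by omega), add_zero, div_self (by positivity)]
  · rw [binPOVM_post_iff hd]
    constructor
    · rintro h rfl
      exact no_weights (by omega) h
    · intro hij
      exact weights_of_ne (by omega) (fun h => hij (Fin.ext h))

/-- For `d ≥ 2`, no finite family of real-valued order monotones characterizes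
the quantum post-processing order of finite-outcome POVMs on `ℂ^d`: its order
monotone dimension is infinite. -/
theorem stmt_17 (d : ℕ) (hd : 2 ≤ d) (n : ℕ) :
    ¬ ∃ f : Fin n → POVM d → ℝ,
      ∀ M N : POVM d, M.Post N ↔ ∀ i, f i M ≤ f i N := by
  rintro ⟨f, hf⟩
  obtain ⟨A, B, hAB⟩ := exists_standard_example d hd n
  have hsep : ∀ i, ∃ c, f c (B i) < f c (A i) := by
    intro i
    by_contra! h
    exact (hAB i i).1 ((hf _ _).2 h) rfl
  choose c hc using hsep
  obtain ⟨i, j, hij, he⟩ := Fintype.exists_ne_map_eq_of_card_lt c (by simp)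
  have h1 := (hf _ _).1 ((hAB i j).2 hij.symm) (c i)
  have h2 := (hf _ _).1 ((hAB j i).2 hij) (c i)
  have h3 := hc i
  have h4 := hc j
  rw [← he] at h4
  linarith
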